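/- arXiv:2605.23283 — 4 statements merged into one kernel-verified Lean document; each statement's English description precedes it below -/
import Mathlib

section
/- For every finite simple connected graph G on n vertices (n ≥ 1), the Q-index satisfies q(G) ≤ 2n(1 − 1/ω(G)). -/
open scoped Classical
open Finset

variable {V : Type*}

noncomputable def adjMx [Fintype V] (G : SimpleGraph V) : Matrix V V ℝ :=
  Matrix.of fun u v => if G.Adj u v then 1 else 0

noncomputable def degMx [Fintype V] [DecidableEq V] (G : SimpleGraph V) : Matrix V V ℝ :=
  Matrix.diagonal fun v => ∑ u, if G.Adj v u then (1 : ℝ) else 0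

noncomputable def signlessLap [Fintype V] [DecidableEq V] (G : SimpleGraph V) : Matrix V V ℝ :=
  degMx G + adjMx G

lemma adjMx_isHermitian [Fintype V] (G : SimpleGraph V) : (adjMx G).IsHermitian := by
  ext u v
  simp [adjMx, Matrix.conjTranspose_apply, SimpleGraph.adj_comm]

lemma signlessLap_isHermitian [Fintype V] [DecidableEq V] (G : SimpleGraph V) :
    (signlessLap G).IsHermitian :=
  (Matrix.isHermitian_diagonal _).add (adjMx_isHermitian G)

noncomputable def maxEig [Fintype V] [DecidableEq V] {A : Matrix V V ℝ}
    (hA : A.IsHermitian) : ℝ := ⨆ v, hA.eigenvalues v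

noncomputable def qIndex [Fintype V] [DecidableEq V] (G : SimpleGraph V) : ℝ :=
  maxEig (signlessLap_isHermitian G)

noncomputable def lambda1 [Fintype V] [DecidableEq V] (G : SimpleGraph V) : ℝ :=
  maxEig (adjMx_isHermitian G)

/-- Maximum size of a clique of `G` containing vertex `v`. -/
noncomputable def cliqueAt (G : SimpleGraph V) (v : V) : ℕ :=
  sSup {n | ∃ s : Finset V, G.IsNClique n s ∧ v ∈ s}

/-- Maximum size of a clique of `G` containing both `u` and `v`. -/
noncomputable def cliqueAtEdge (G : SimpleGraph V) (u v : V) : ℕ :=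
  sSup {n | ∃ s : Finset V, G.IsNClique n s ∧ u ∈ s ∧ v ∈ s}

/-!
For a vector `x`, twice the form `xᵀ Q(G) x` is the sum of `(x u + x v) ^ 2` over ordered adjacent
pairs. Weight the vertices by `p ≥ 0` and compare `∑ p u p v (x u + x v) ^ 2` with
`4 (1 - 1/ω) (∑ p v) (∑ p v x v ^ 2)`. As in the Motzkin–Straus theorem, the difference is a
quadratic form in `p` that is affine along `e u - e v` when `u` and `v` are not adjacent, so the
weight of one of them can be moved onto the other without decreasing it, until the support of `p`
is a clique. There, with `P = ∑ p v`, `S = ∑ p v x v ^ 2` and `D = ∑ (p v x v) ^ 2`, the claim for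
`ω ≥ 2` reads `(∑ p v x v) ^ 2 ≤ (1 - 2/ω) P S + 2 D`, a convex combination of the Cauchy–Schwarz
inequalities `(∑ p v x v) ^ 2 ≤ P S` and `(∑ p v x v) ^ 2 ≤ ω D`. The theorem is the case `p = 1`.
-/

section Symmetrization

open Function Matrix

variable [Fintype V] {R : Type*} [CommRing R]

lemma dotProduct_mulVec_add_smul_self {M : Matrix V V R} (hM : M.IsSymm) (p d : V → R) (t : R) :
    (p + t • d) ⬝ᵥ M *ᵥ (p + t • d) =
      p ⬝ᵥ M *ᵥ p + 2 * t * (d ⬝ᵥ M *ᵥ p) + t ^ 2 * (d ⬝ᵥ M *ᵥ d) := by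
  have hcomm : p ⬝ᵥ M *ᵥ d = d ⬝ᵥ M *ᵥ p := by
    simpa only [hM.eq] using dotProduct_transpose_mulVec M p d
  simp only [mulVec_add, mulVec_smul, add_dotProduct, dotProduct_add,
    smul_dotProduct, dotProduct_smul, smul_eq_mul, hcomm]
  ring

lemma single_sub_single_dotProduct_mulVec_self {M : Matrix V V R} (hM : M.IsSymm) (u v : V) :
    (Pi.single u 1 - Pi.single v 1) ⬝ᵥ M *ᵥ (Pi.single u 1 - Pi.single v 1) =
      M u u + M v v - 2 * M u v := by
  simp only [mulVec_sub, sub_dotProduct, single_one_dotProduct, Pi.sub_apply,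
    mulVec_single_one, col_apply, hM.apply u v]
  ring

lemma dotProduct_vecMulVec_one_add_mulVec_self (w y : V → R) :
    w ⬝ᵥ (vecMulVec y 1 + vecMulVec 1 y) *ᵥ w = 2 * ((∑ v, w v) * (w ⬝ᵥ y)) := by
  simp only [add_mulVec, vecMulVec_mulVec, op_smul_eq_smul, dotProduct_add, dotProduct_smul,
    one_dotProduct, dotProduct_one, dotProduct_comm y, smul_eq_mul]
  ring

variable [LinearOrder R] [IsStrictOrderedRing R]

lemma exists_support_ssubset_dotProduct_mulVec_le {M : Matrix V V R} (hM : M.IsSymm)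
    {p : V → R} (hp : 0 ≤ p) {u v : V} (hu : u ∈ support p) (hv : v ∈ support p) (huv : u ≠ v)
    (hconv : 2 * M u v ≤ M u u + M v v) :
    ∃ w, 0 ≤ w ∧ support w ⊂ support p ∧ p ⬝ᵥ M *ᵥ p ≤ w ⬝ᵥ M *ᵥ w := by
  wlog hgrad : (M *ᵥ p) v ≤ (M *ᵥ p) u generalizing u v
  · exact this hv hu huv.symm (by rw [hM.apply u v]; linarith) (le_of_not_ge hgrad)
  -- Moving the whole weight of `v` to `u` is an ascent direction along which the form is convex.
  let w : V → R := p + p v • (Pi.single u 1 - Pi.single v 1)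
  have hwv : w v = 0 := by simp [w, huv.symm]
  have hw : ∀ a, a ≠ v → w a = p a + if a = u then p v else 0 := by
    intro a ha
    simp [w, ha, Pi.single_apply]
  refine ⟨w, fun a ↦ ?_, ?_, ?_⟩
  · obtain rfl | ha := eq_or_ne a v
    · exact hwv.ge
    · rw [hw a ha]
      exact add_nonneg (hp a) (ite_nonneg (hp v) le_rfl)
  · refine LE.le.ssubset_of_mem_notMem (fun a ha ↦ ?_) hv (by simp [hwv])
    have hav : a ≠ v := fun h ↦ ha (h ▸ hwv)
    obtain rfl | hau := eq_or_ne a u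
    · exact hu
    · simpa [hw a hav, hau] using ha
  · rw [dotProduct_mulVec_add_smul_self hM, single_sub_single_dotProduct_mulVec_self hM,
      sub_dotProduct, single_one_dotProduct, single_one_dotProduct]
    have hslope : 0 ≤ p v * ((M *ᵥ p) u - (M *ᵥ p) v) := mul_nonneg (hp v) (sub_nonneg.2 hgrad)
    have hcurv : 0 ≤ p v ^ 2 * (M u u + M v v - 2 * M u v) :=
      mul_nonneg (sq_nonneg _) (sub_nonneg.2 hconv)
    linarith

theorem exists_isClique_support_dotProduct_mulVec_le (G : SimpleGraph V) {M : Matrix V V R}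
    (hM : M.IsSymm) (hconv : ∀ u v, ¬G.Adj u v → 2 * M u v ≤ M u u + M v v)
    {p : V → R} (hp : 0 ≤ p) :
    ∃ w, 0 ≤ w ∧ G.IsClique (support w) ∧ p ⬝ᵥ M *ᵥ p ≤ w ⬝ᵥ M *ᵥ w := by
  induction hs : support p using WellFoundedLT.induction generalizing p with
  | ind s ih =>
    by_cases hclique : G.IsClique (support p)
    · exact ⟨p, hp, hclique, le_rfl⟩
    obtain ⟨u, hu, v, hv, huv, hadj⟩ : ∃ u ∈ support p, ∃ v ∈ support p, u ≠ v ∧ ¬G.Adj u v := by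
      simpa only [SimpleGraph.isClique_iff, Set.Pairwise, not_forall, exists_prop] using hclique
    obtain ⟨p', hp', hsub, hle⟩ :=
      exists_support_ssubset_dotProduct_mulVec_le hM hp hu hv huv (hconv u v hadj)
    obtain ⟨w, hw, hwclique, hle'⟩ := ih _ (hs ▸ hsub) hp' rfl
    exact ⟨w, hw, hwclique, hle.trans hle'⟩

theorem dotProduct_mulVec_le_of_forall_isClique_support (G : SimpleGraph V) {M : Matrix V V R}
    (hM : M.IsSymm) (hconv : ∀ u v, ¬G.Adj u v → 2 * M u v ≤ M u u + M v v) {y : V → R}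
    (hclique : ∀ w, 0 ≤ w → G.IsClique (support w) →
      w ⬝ᵥ M *ᵥ w ≤ 2 * ((∑ v, w v) * (w ⬝ᵥ y)))
    {p : V → R} (hp : 0 ≤ p) : p ⬝ᵥ M *ᵥ p ≤ 2 * ((∑ v, p v) * (p ⬝ᵥ y)) := by
  -- Moving weight may change the right-hand side, so it is absorbed into the form.
  let N : Matrix V V R := vecMulVec y 1 + vecMulVec 1 y
  have hform (w : V → R) :
      w ⬝ᵥ (M - N) *ᵥ w = w ⬝ᵥ M *ᵥ w - 2 * ((∑ v, w v) * (w ⬝ᵥ y)) := by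
    rw [sub_mulVec, dotProduct_sub, dotProduct_vecMulVec_one_add_mulVec_self]
  have hsymm : (M - N).IsSymm := hM.sub (by ext u v; simp [N, add_comm])
  have hconv' (u v : V) (huv : ¬G.Adj u v) : 2 * (M - N) u v ≤ (M - N) u u + (M - N) v v := by
    simp only [N, Matrix.sub_apply, Matrix.add_apply, vecMulVec_apply, Pi.one_apply]
    linarith [hconv u v huv]
  obtain ⟨w, hw, hwclique, hle⟩ := exists_isClique_support_dotProduct_mulVec_le G hsymm hconv' hp
  rw [hform, hform] at hle
  linarith [hclique w hw hwclique]

end Symmetrization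

section EdgeForm

open Function Matrix

section CommRing

variable {R : Type*} [CommRing R]

/-- The matrix with entry `(x u + x v) ^ 2` at each adjacent pair `u`, `v` and `0` elsewhere. Its
quadratic form at a vertex weighting `p` is the weighted analogue of `2 xᵀ Q(G) x`, which is the
case `p = 1`. -/
noncomputable def edgeSqMx (G : SimpleGraph V) (x : V → R) : Matrix V V R :=
  of fun u v ↦ if G.Adj u v then (x u + x v) ^ 2 else 0

lemma edgeSqMx_bot (x : V → R) : edgeSqMx ⊥ x = 0 := by
  ext u v
  simp [edgeSqMx]

lemma edgeSqMx_isSymm (G : SimpleGraph V) (x : V → R) : (edgeSqMx G x).IsSymm := by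
  ext u v
  simp [edgeSqMx, G.adj_comm, add_comm]

variable [Fintype V]

lemma sum_sum_mul_mul_add_sq (w x : V → R) :
    ∑ u, ∑ v, w u * w v * (x u + x v) ^ 2 =
      2 * ((∑ v, w v) * ∑ v, w v * x v ^ 2) + 2 * (∑ v, w v * x v) ^ 2 := by
  have hentry (u v : V) : w u * w v * (x u + x v) ^ 2 =
      w u * x u ^ 2 * w v + 2 * (w u * x u * (w v * x v)) + w u * (w v * x v ^ 2) := by
    ring
  simp only [hentry, sum_add_distrib, ← mul_sum, ← sum_mul]
  ring

lemma dotProduct_edgeSqMx_mulVec_of_isClique_support {G : SimpleGraph V} {w : V → R}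
    (hw : G.IsClique (support w)) (x : V → R) :
    w ⬝ᵥ edgeSqMx G x *ᵥ w =
      2 * ((∑ v, w v) * ∑ v, w v * x v ^ 2) + 2 * (∑ v, w v * x v) ^ 2 -
        4 * ∑ v, (w v * x v) ^ 2 := by
  have hentry (u v : V) : w u * (edgeSqMx G x u v * w v) =
      w u * w v * (x u + x v) ^ 2 - if u = v then 4 * (w u * x u) ^ 2 else 0 := by
    by_cases hwu : w u = 0
    · simp [hwu]
    by_cases hwv : w v = 0
    · have huv : u ≠ v := fun h ↦ hwu (h ▸ hwv)
      simp [hwv, huv]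
    obtain rfl | huv := eq_or_ne u v
    · simp only [edgeSqMx, of_apply, G.irrefl, if_true, if_false]
      ring
    · simp only [edgeSqMx, of_apply, hw hwu hwv huv, huv, if_true, if_false]
      ring
  calc w ⬝ᵥ edgeSqMx G x *ᵥ w
      = ∑ u, ∑ v, w u * (edgeSqMx G x u v * w v) := by simp only [dotProduct, mulVec, mul_sum]
    _ = ∑ u, ∑ v, w u * w v * (x u + x v) ^ 2 - 4 * ∑ v, (w v * x v) ^ 2 := by
        simp only [hentry, sum_sub_distrib, sum_ite_eq, mem_univ, if_true, mul_sum]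
    _ = _ := by rw [sum_sum_mul_mul_add_sq]

end CommRing

variable [Fintype V] {R : Type*} [Field R] [LinearOrder R] [IsStrictOrderedRing R]

lemma sq_sum_mul_le_of_card_support_le {r : ℕ} (hr : 2 ≤ r) {w : V → R} (hw : 0 ≤ w)
    (hcard : #{v | w v ≠ 0} ≤ r) (x : V → R) :
    (∑ v, w v * x v) ^ 2 ≤
      (1 - 2 / (r : R)) * ((∑ v, w v) * ∑ v, w v * x v ^ 2) + 2 * ∑ v, (w v * x v) ^ 2 := by
  have hr' : (2 : R) ≤ r := by exact_mod_cast hr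
  have hweighted : (∑ v, w v * x v) ^ 2 ≤ (∑ v, w v) * ∑ v, w v * x v ^ 2 :=
    sum_sq_le_sum_mul_sum_of_sq_le_mul univ (fun v _ ↦ hw v)
      (fun v _ ↦ mul_nonneg (hw v) (sq_nonneg _)) fun v _ ↦ (by ring : _ = _).le
  have hsupport : (∑ v, w v * x v) ^ 2 ≤ r * ∑ v, (w v * x v) ^ 2 := by
    calc (∑ v, w v * x v) ^ 2 = (∑ v with w v ≠ 0, w v * x v) ^ 2 := by
          rw [sum_filter_of_ne fun v _ ↦ left_ne_zero_of_mul]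
      _ ≤ #{v | w v ≠ 0} * ∑ v with w v ≠ 0, (w v * x v) ^ 2 := sq_sum_le_card_mul_sum_sq
      _ ≤ r * ∑ v, (w v * x v) ^ 2 := by
          gcongr
          exact filter_subset _ _
  calc (∑ v, w v * x v) ^ 2
      = (1 - 2 / (r : R)) * (∑ v, w v * x v) ^ 2 + 2 / r * (∑ v, w v * x v) ^ 2 := by ring
    _ ≤ (1 - 2 / (r : R)) * ((∑ v, w v) * ∑ v, w v * x v ^ 2) +
          2 / r * (r * ∑ v, (w v * x v) ^ 2) := by
        have : 0 ≤ 1 - 2 / (r : R) := sub_nonneg.2 (div_le_one_of_le₀ hr' r.cast_nonneg)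
        gcongr
    _ = (1 - 2 / (r : R)) * ((∑ v, w v) * ∑ v, w v * x v ^ 2) + 2 * ∑ v, (w v * x v) ^ 2 := by
        field_simp

lemma dotProduct_edgeSqMx_mulVec_le_of_isClique_support {G : SimpleGraph V}
    (hω : 2 ≤ G.cliqueNum) {w : V → R} (hw : 0 ≤ w) (hclique : G.IsClique (support w))
    (x : V → R) :
    w ⬝ᵥ edgeSqMx G x *ᵥ w ≤
      4 * (1 - 1 / (G.cliqueNum : R)) * ((∑ v, w v) * ∑ v, w v * x v ^ 2) := by
  have hcard : #{v | w v ≠ 0} ≤ G.cliqueNum :=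
    SimpleGraph.IsClique.card_le_cliqueNum (tc := by simpa [support] using hclique)
  rw [dotProduct_edgeSqMx_mulVec_of_isClique_support hclique]
  linear_combination 2 * sq_sum_mul_le_of_card_support_le hω hw hcard x

theorem dotProduct_edgeSqMx_mulVec_le (G : SimpleGraph V) {p : V → R} (hp : 0 ≤ p) (x : V → R) :
    p ⬝ᵥ edgeSqMx G x *ᵥ p ≤
      4 * (1 - 1 / (G.cliqueNum : R)) * ((∑ v, p v) * ∑ v, p v * x v ^ 2) := by
  obtain hω | hω := lt_or_ge G.cliqueNum 2
  · have hG : G = ⊥ := SimpleGraph.cliqueFree_two.1 fun s hs ↦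
      (hs.isClique.card_le_cliqueNum.trans_lt hω).ne hs.card_eq
    rw [hG, edgeSqMx_bot, zero_mulVec, dotProduct_zero]
    exact mul_nonneg (mul_nonneg zero_le_four (Nat.one_sub_one_div_cast_nonneg _)) <|
      mul_nonneg (sum_nonneg fun v _ ↦ hp v) <|
        sum_nonneg fun v _ ↦ mul_nonneg (hp v) (sq_nonneg _)
  let y : V → R := fun v ↦ 2 * (1 - 1 / (G.cliqueNum : R)) * x v ^ 2
  have hy (w : V → R) : 2 * ((∑ v, w v) * (w ⬝ᵥ y)) =
      4 * (1 - 1 / (G.cliqueNum : R)) * ((∑ v, w v) * ∑ v, w v * x v ^ 2) := by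
    simp only [dotProduct, y, mul_left_comm (w _), ← mul_sum]
    ring
  rw [← hy]
  refine dotProduct_mulVec_le_of_forall_isClique_support G (edgeSqMx_isSymm G x)
    (fun u v huv ↦ by simp [edgeSqMx, huv]) (fun w hw hclique ↦ ?_) hp
  rw [hy]
  exact dotProduct_edgeSqMx_mulVec_le_of_isClique_support hω hw hclique x

end EdgeForm

section SignlessLap

open Matrix

lemma signlessLap_mulVec_apply [Fintype V] [DecidableEq V] (G : SimpleGraph V) (x : V → ℝ)
    (u : V) : (signlessLap G *ᵥ x) u = ∑ v, if G.Adj u v then x u + x v else 0 := by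
  rw [signlessLap, add_mulVec, Pi.add_apply, degMx, mulVec_diagonal, sum_mul, mulVec, dotProduct,
    ← sum_add_distrib]
  refine sum_congr rfl fun v _ ↦ ?_
  simp only [adjMx, of_apply]
  split_ifs <;> simp

lemma one_dotProduct_edgeSqMx_mulVec_one [Fintype V] [DecidableEq V] (G : SimpleGraph V)
    (x : V → ℝ) : 1 ⬝ᵥ edgeSqMx G x *ᵥ 1 = 2 * (x ⬝ᵥ signlessLap G *ᵥ x) := by
  let f (u v : V) : ℝ := if G.Adj u v then x u * (x u + x v) else 0
  have hentry (u v : V) : edgeSqMx G x u v = f u v + f v u := by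
    simp only [edgeSqMx, of_apply, f, G.adj_comm v u]
    split_ifs <;> ring
  have hsignless : x ⬝ᵥ signlessLap G *ᵥ x = ∑ u, ∑ v, f u v := by
    simp only [dotProduct, signlessLap_mulVec_apply, mul_sum, mul_ite, mul_zero, f]
  calc 1 ⬝ᵥ edgeSqMx G x *ᵥ 1
      = ∑ u, ∑ v, f u v + ∑ u, ∑ v, f v u := by
        simp only [one_dotProduct, mulVec, dotProduct_one, hentry, sum_add_distrib]
    _ = 2 * (x ⬝ᵥ signlessLap G *ᵥ x) := by
        rw [sum_comm (f := fun u v ↦ f v u), hsignless, two_mul]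

lemma maxEig_le [Fintype V] [DecidableEq V] [Nonempty V] {A : Matrix V V ℝ} (hA : A.IsHermitian)
    {c : ℝ} (h : ∀ x : V → ℝ, x ⬝ᵥ A *ᵥ x ≤ c * ∑ v, x v ^ 2) : maxEig hA ≤ c := by
  refine ciSup_le fun i ↦ ?_
  have hnorm : ∑ v, hA.eigenvectorBasis i v ^ 2 = 1 := by
    rw [← EuclideanSpace.real_norm_sq_eq, hA.eigenvectorBasis.orthonormal.1 i, one_pow]
  rw [hA.eigenvalues_eq]
  simpa [hnorm] using h (hA.eigenvectorBasis i)

end SignlessLap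

theorem stmt0_general {V : Type*} [Fintype V] [DecidableEq V] [Nonempty V] (G : SimpleGraph V) :
    qIndex G ≤ 2 * (Fintype.card V : ℝ) * (1 - 1 / (G.cliqueNum : ℝ)) := by
  refine maxEig_le (signlessLap_isHermitian G) fun x ↦ ?_
  have h := dotProduct_edgeSqMx_mulVec_le G (p := 1) zero_le_one x
  simp only [one_dotProduct_edgeSqMx_mulVec_one, Pi.one_apply, one_mul, sum_const, card_univ,
    nsmul_eq_mul, mul_one] at h
  linarith

/-- **Abreu–Nikiforov.** For a connected graph `G` on `n ≥ 1` vertices,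
`q(G) ≤ 2n(1 - 1/ω(G))`. -/
theorem stmt0 {V : Type*} [Fintype V] [DecidableEq V] [Nonempty V]
    (G : SimpleGraph V) (hconn : G.Connected) :
    qIndex G ≤ 2 * (Fintype.card V : ℝ) * (1 - 1 / (G.cliqueNum : ℝ)) :=
  stmt0_general G
end

section
/- For every finite simple connected graph G and every real α with 0 ≤ α ≤ 1/2, the largest eigenvalue of the matrix A_α(G) = α·D(G) + (1 − α)·A(G) is at most ∑_{v ∈ V(G)} (1 − 1/c(v)). -/
open scoped Classical
open Finset

variable {V : Type*}

/-!
Since `½ (D + A) - A_α = (½ - α) (D - A)` and the Laplacian `D - A` is positive semidefinite, it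
suffices to bound the form of `½ (D + A)`, that is, to show
`∑_{u ~ v} (x u + x v)² ≤ 4 (∑ a) (∑ x²)` (sum over ordered pairs), where `a v = 1 - 1 / c(v)`.
Writing `x = √a · y` with `y ≥ 0`, this follows from the copositivity-type inequality
`∑_{u ~ v} t u t v (y u + y v)² / min (a u) (a v) ≤ 4 (∑ t) (∑ t y²)` for `t ≥ 0`, taken at `t = a`.
As in the Motzkin–Straus argument, the difference of the two sides is affine in `t` along
`e_u - e_v` whenever `u` and `v` are not adjacent, so mass can be moved until the support of `t` is
a clique `K`. There `min (a u) (a v) ≥ 1 - 1 / #K`, and two applications of Cauchy–Schwarz conclude.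
-/

section MassTransfer

open Matrix

variable {R : Type*}

/-- The vector obtained from `t` by moving all of its mass at `v` to `u`, for `u ≠ v`. It is the
elementary step of the Motzkin–Straus symmetrization, written as a displacement along `e_u - e_v` so
that quadratic forms can be expanded along it. -/
def moveMass [DecidableEq V] [Ring R] (t : V → R) (u v : V) : V → R :=
  t + t v • (Pi.single u 1 - Pi.single v 1)

lemma moveMass_apply_right [DecidableEq V] [Ring R] (t : V → R) {u v : V} (huv : u ≠ v) :
    moveMass t u v v = 0 := by
  simp [moveMass, huv.symm]

lemma moveMass_apply_of_ne_right [DecidableEq V] [Ring R] (t : V → R) {u v i : V} (hi : i ≠ v) :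
    moveMass t u v i = t i + t v * (Pi.single u 1 : V → R) i := by
  simp [moveMass, hi]

lemma moveMass_nonneg [DecidableEq V] [Ring R] [PartialOrder R] [IsOrderedRing R] {t : V → R}
    (ht : 0 ≤ t) {u v : V} (huv : u ≠ v) : 0 ≤ moveMass t u v := by
  intro i
  by_cases hi : i = v
  · rw [hi, moveMass_apply_right t huv, Pi.zero_apply]
  · rw [moveMass_apply_of_ne_right t hi]
    have hsingle : (0 : V → R) ≤ Pi.single u 1 := Pi.single_nonneg.2 zero_le_one
    exact add_nonneg (ht i) (mul_nonneg (ht v) (hsingle i))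

lemma support_moveMass_ssubset [DecidableEq V] [Ring R] {t : V → R} {u v : V} (huv : u ≠ v)
    (hu : t u ≠ 0) (hv : t v ≠ 0) : Function.support (moveMass t u v) ⊂ Function.support t := by
  suffices hsub : Function.support (moveMass t u v) ⊆ Function.support t from
    (Set.ssubset_iff_of_subset hsub).2 ⟨v, hv, fun h => h (moveMass_apply_right t huv)⟩
  refine fun i hi hti => hi ?_
  have hiv : i ≠ v := fun h => hv (h ▸ hti)
  have hiu : i ≠ u := fun h => hu (h ▸ hti)
  simp [moveMass_apply_of_ne_right t hiv, hiu, hti]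

lemma dotProduct_mulVec_add_smul [Fintype V] [CommRing R] (N : Matrix V V R) (t d : V → R) (r : R) :
    (t + r • d) ⬝ᵥ N *ᵥ (t + r • d)
      = t ⬝ᵥ N *ᵥ t + r * (d ⬝ᵥ N *ᵥ t + t ⬝ᵥ N *ᵥ d) + r ^ 2 * (d ⬝ᵥ N *ᵥ d) := by
  simp only [mulVec_add, mulVec_smul, add_dotProduct, dotProduct_add, smul_dotProduct,
    dotProduct_smul, smul_eq_mul]
  ring

lemma dotProduct_mulVec_single_sub_single [Fintype V] [DecidableEq V] [CommRing R]
    (N : Matrix V V R) (u v : V) :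
    (Pi.single u 1 - Pi.single v 1) ⬝ᵥ N *ᵥ (Pi.single u 1 - Pi.single v 1)
      = N u u + N v v - (N u v + N v u) := by
  simp only [mulVec_sub, mulVec_single_one, sub_dotProduct, dotProduct_sub, single_one_dotProduct,
    col_apply]
  ring

variable [Fintype V] [CommRing R] [LinearOrder R] [IsStrictOrderedRing R] {N : Matrix V V R}

lemma dotProduct_mulVec_le_moveMass_or_swap [DecidableEq V] {t : V → R} (ht : 0 ≤ t) {u v : V}
    (hN : N u v + N v u ≤ N u u + N v v) :
    t ⬝ᵥ N *ᵥ t ≤ moveMass t u v ⬝ᵥ N *ᵥ moveMass t u v ∨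
      t ⬝ᵥ N *ᵥ t ≤ moveMass t v u ⬝ᵥ N *ᵥ moveMass t v u := by
  set d : V → R := Pi.single u 1 - Pi.single v 1 with hd
  have hmove : moveMass t v u = t + (-t u) • d := by
    rw [moveMass, hd, neg_smul, ← smul_neg, neg_sub]
  have hconvex : 0 ≤ d ⬝ᵥ N *ᵥ d := by
    rw [dotProduct_mulVec_single_sub_single]
    exact sub_nonneg.2 hN
  rw [hmove, moveMass, dotProduct_mulVec_add_smul, dotProduct_mulVec_add_smul]
  rcases le_total 0 (d ⬝ᵥ N *ᵥ t + t ⬝ᵥ N *ᵥ d) with hslope | hslope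
  · left
    have := mul_nonneg (ht v) hslope
    have := mul_nonneg (sq_nonneg (t v)) hconvex
    linarith
  · right
    have := mul_nonneg_of_nonpos_of_nonpos (neg_nonpos.2 (ht u)) hslope
    have := mul_nonneg (sq_nonneg (-t u)) hconvex
    linarith

theorem dotProduct_mulVec_nonpos_of_forall_isClique {G : SimpleGraph V}
    (hN : ∀ u v, u ≠ v → ¬G.Adj u v → N u v + N v u ≤ N u u + N v v)
    (hclique : ∀ t : V → R, 0 ≤ t → G.IsClique (Function.support t) → t ⬝ᵥ N *ᵥ t ≤ 0)
    {t : V → R} (ht : 0 ≤ t) : t ⬝ᵥ N *ᵥ t ≤ 0 := by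
  induction hn : (Function.support t).ncard using Nat.strong_induction_on generalizing t with
  | _ n ih =>
  by_cases hsupp : G.IsClique (Function.support t)
  · exact hclique t ht hsupp
  · obtain ⟨u, hu, v, hv, huv, hadj⟩ :
        ∃ u, t u ≠ 0 ∧ ∃ v, t v ≠ 0 ∧ u ≠ v ∧ ¬G.Adj u v := by
      simpa [SimpleGraph.isClique_iff, Set.Pairwise] using hsupp
    have hmove {u v : V} (huv : u ≠ v) (hu : t u ≠ 0) (hv : t v ≠ 0) :
        moveMass t u v ⬝ᵥ N *ᵥ moveMass t u v ≤ 0 :=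
      ih _ (hn ▸ Set.ncard_lt_ncard (support_moveMass_ssubset huv hu hv))
        (moveMass_nonneg ht huv) rfl
    rcases dotProduct_mulVec_le_moveMass_or_swap ht (hN u v huv hadj) with hle | hle
    · exact hle.trans (hmove huv hu hv)
    · exact hle.trans (hmove huv.symm hv hu)

end MassTransfer

section WeightedSums

variable {ι R : Type*}

lemma sum_sum_mul_mul_add_sq_s4 [CommRing R] (K : Finset ι) (t y : ι → R) :
    ∑ u ∈ K, ∑ v ∈ K, t u * t v * (y u + y v) ^ 2
      = 2 * ((∑ u ∈ K, t u) * ∑ u ∈ K, t u * y u ^ 2) + 2 * (∑ u ∈ K, t u * y u) ^ 2 := by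
  calc ∑ u ∈ K, ∑ v ∈ K, t u * t v * (y u + y v) ^ 2
      = ∑ u ∈ K, ∑ v ∈ K, (t u * y u ^ 2 * t v + t u * (t v * y v ^ 2)
          + 2 * (t u * y u * (t v * y v))) :=
        sum_congr rfl fun u _ => sum_congr rfl fun v _ => by ring
    _ = _ := by
        simp only [sum_add_distrib, ← mul_sum, ← sum_mul]
        ring

lemma sum_sum_ne_mul_mul_add_sq [DecidableEq ι] [CommRing R] (K : Finset ι) (t y : ι → R) :
    ∑ u ∈ K, ∑ v ∈ K, (if u = v then 0 else t u * t v * (y u + y v) ^ 2)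
      = 2 * ((∑ u ∈ K, t u) * ∑ u ∈ K, t u * y u ^ 2) + 2 * (∑ u ∈ K, t u * y u) ^ 2
        - 4 * ∑ u ∈ K, (t u * y u) ^ 2 := by
  rw [← sum_sum_mul_mul_add_sq_s4, mul_sum, ← sum_sub_distrib]
  refine sum_congr rfl fun u hu => ?_
  have hdiag : ∑ v ∈ K, (if u = v then t u * t v * (y u + y v) ^ 2 else 0)
      = 4 * (t u * y u) ^ 2 := by
    rw [sum_ite_eq, if_pos hu]
    ring
  rw [← hdiag, ← sum_sub_distrib]
  exact sum_congr rfl fun v _ => by split_ifs <;> ring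

theorem sum_sum_ne_mul_mul_add_sq_le [DecidableEq ι] [Field R] [LinearOrder R]
    [IsStrictOrderedRing R] {K : Finset ι} {t : ι → R} (ht : ∀ i ∈ K, 0 ≤ t i) (y : ι → R) :
    ∑ u ∈ K, ∑ v ∈ K, (if u = v then 0 else t u * t v * (y u + y v) ^ 2)
      ≤ (1 - 1 / (#K : R)) * (4 * (∑ u ∈ K, t u) * ∑ u ∈ K, t u * y u ^ 2) := by
  rcases le_or_gt #K 1 with hcard | hcard
  · rcases Nat.le_one_iff_eq_zero_or_eq_one.1 hcard with hzero | hone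
    · simp [card_eq_zero.1 hzero]
    · obtain ⟨i, rfl⟩ := card_eq_one.1 hone
      simp
  have htwo : (2 : R) ≤ #K := mod_cast hcard
  have hpos : (0 : R) < #K := by linarith
  have hsq_le_mul : (∑ u ∈ K, t u * y u) ^ 2 ≤ (∑ u ∈ K, t u) * ∑ u ∈ K, t u * y u ^ 2 :=
    sum_sq_le_sum_mul_sum_of_sq_le_mul K ht
      (fun i hi => mul_nonneg (ht i hi) (sq_nonneg _)) fun i _ => le_of_eq (by ring)
  have hsq_le_card : (∑ u ∈ K, t u * y u) ^ 2 ≤ #K * ∑ u ∈ K, (t u * y u) ^ 2 :=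
    sq_sum_le_card_mul_sum_sq
  rw [sum_sum_ne_mul_mul_add_sq, one_sub_div hpos.ne', div_mul_eq_mul_div, le_div_iff₀ hpos]
  linarith [mul_le_mul_of_nonneg_left hsq_le_mul (sub_nonneg.2 htwo)]

end WeightedSums

/-- A vertex weight is a clique majorant of `G` if it is at least `1 - 1 / #s` at each vertex of
each clique `s`. The pointwise smallest one is `v ↦ 1 - 1 / c(v)`, but only the defining
inequalities matter for bounding quadratic forms. -/
def IsCliqueMajorant (G : SimpleGraph V) (a : V → ℝ) : Prop :=
  ∀ s : Finset V, G.IsClique (s : Set V) → ∀ v ∈ s, 1 - 1 / (#s : ℝ) ≤ a v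

namespace IsCliqueMajorant

variable {G : SimpleGraph V} {a : V → ℝ}

lemma nonneg (ha : IsCliqueMajorant G a) (v : V) : 0 ≤ a v := by
  simpa using ha {v} (by simp) v (mem_singleton_self v)

lemma pos_of_adj (ha : IsCliqueMajorant G a) {u v : V} (huv : G.Adj u v) : 0 < a u := by
  have hpair : G.IsClique (({u, v} : Finset V) : Set V) := by
    rw [coe_pair, SimpleGraph.isClique_pair]
    exact fun _ => huv
  have h := ha {u, v} hpair u (mem_insert_self u _)
  rw [card_pair huv.ne] at h
  norm_num at h
  linarith

lemma inv_min_le (ha : IsCliqueMajorant G a) {s : Finset V} (hs : G.IsClique (s : Set V))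
    {u v : V} (hu : u ∈ s) (hv : v ∈ s) (huv : u ≠ v) :
    (min (a u) (a v))⁻¹ ≤ (1 - 1 / (#s : ℝ))⁻¹ := by
  have hcard : (1 : ℝ) < #s := mod_cast one_lt_card.2 ⟨u, hu, v, hv, huv⟩
  have hpos : 0 < 1 - 1 / (#s : ℝ) :=
    sub_pos.2 ((div_lt_one (zero_lt_one.trans hcard)).2 hcard)
  exact inv_anti₀ hpos (le_min (ha s hs u hu) (ha s hs v hv))

end IsCliqueMajorant

lemma card_le_cliqueAt [Finite V] {G : SimpleGraph V} {s : Finset V}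
    (hs : G.IsClique (s : Set V)) {v : V} (hv : v ∈ s) : #s ≤ cliqueAt G v := by
  have := Fintype.ofFinite V
  refine le_csSup ⟨Fintype.card V, ?_⟩ ⟨s, ⟨hs, rfl⟩, hv⟩
  rintro _ ⟨s, hs, -⟩
  exact hs.card_eq ▸ card_le_univ s

lemma isCliqueMajorant_one_sub_one_div_cliqueAt [Finite V] (G : SimpleGraph V) :
    IsCliqueMajorant G fun v => 1 - 1 / (cliqueAt G v : ℝ) := by
  intro s hs v hv
  have hpos : (0 : ℝ) < #s := mod_cast card_pos.2 ⟨v, hv⟩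
  have hle : (#s : ℝ) ≤ cliqueAt G v := mod_cast card_le_cliqueAt hs hv
  exact sub_le_sub_left (one_div_le_one_div_of_le hpos hle) 1

lemma add_sq_le_mul_inv_min_mul {a b x y : ℝ} (ha : 0 < a) (hb : 0 < b) (hx : 0 ≤ x)
    (hy : 0 ≤ y) : (x + y) ^ 2 ≤ a * b * ((min a b)⁻¹ * (x / √a + y / √b) ^ 2) := by
  have hmin : 0 < min a b := lt_min ha hb
  have hmax : 0 ≤ max a b := ha.le.trans (le_max_left a b)
  have hle {c z : ℝ} (hc : 0 < c) (hz : 0 ≤ z) (hcm : c ≤ max a b) :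
      z ≤ √(max a b) * (z / √c) := by
    rw [mul_div_left_comm]
    exact le_mul_of_one_le_right hz
      ((one_le_div (Real.sqrt_pos.2 hc)).2 (Real.sqrt_le_sqrt hcm))
  have hadd : x + y ≤ √(max a b) * (x / √a + y / √b) := by
    rw [mul_add]
    exact add_le_add (hle ha hx (le_max_left a b)) (hle hb hy (le_max_right a b))
  calc (x + y) ^ 2 ≤ (√(max a b) * (x / √a + y / √b)) ^ 2 :=
        pow_le_pow_left₀ (add_nonneg hx hy) hadd 2
    _ = max a b * (x / √a + y / √b) ^ 2 := by rw [mul_pow, Real.sq_sqrt hmax]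
    _ = a * b * ((min a b)⁻¹ * (x / √a + y / √b) ^ 2) := by
        rw [← min_mul_max a b, mul_mul_mul_comm, mul_inv_cancel₀ hmin.ne', one_mul]

section CliqueForm

open Matrix

variable {G : SimpleGraph V} {a : V → ℝ}

lemma sum_adj_mul_mul_le_of_isClique (ha : IsCliqueMajorant G a) {K : Finset V}
    (hK : G.IsClique (K : Set V)) {t : V → ℝ} (ht : ∀ v ∈ K, 0 ≤ t v) (y : V → ℝ) :
    ∑ u ∈ K, ∑ v ∈ K,
        (if G.Adj u v then t u * t v * ((min (a u) (a v))⁻¹ * (y u + y v) ^ 2) else 0)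
      ≤ 4 * (∑ u ∈ K, t u) * ∑ u ∈ K, t u * y u ^ 2 := by
  set c : ℝ := 1 - 1 / #K
  have hterm : ∀ u ∈ K, ∀ v ∈ K,
      (if G.Adj u v then t u * t v * ((min (a u) (a v))⁻¹ * (y u + y v) ^ 2) else 0)
        ≤ c⁻¹ * if u = v then 0 else t u * t v * (y u + y v) ^ 2 := by
    intro u hu v hv
    rcases eq_or_ne u v with rfl | huv
    · simp
    · rw [if_pos (hK hu hv huv), if_neg huv, mul_left_comm]
      exact mul_le_mul_of_nonneg_right (ha.inv_min_le hK hu hv huv)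
        (mul_nonneg (mul_nonneg (ht u hu) (ht v hv)) (sq_nonneg _))
  have hmass : 0 ≤ ∑ u ∈ K, t u := sum_nonneg ht
  have hmoment : 0 ≤ ∑ u ∈ K, t u * y u ^ 2 :=
    sum_nonneg fun u hu => mul_nonneg (ht u hu) (sq_nonneg _)
  calc ∑ u ∈ K, ∑ v ∈ K,
          (if G.Adj u v then t u * t v * ((min (a u) (a v))⁻¹ * (y u + y v) ^ 2) else 0)
      ≤ c⁻¹ * ∑ u ∈ K, ∑ v ∈ K, (if u = v then 0 else t u * t v * (y u + y v) ^ 2) := by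
        simp only [mul_sum]
        exact sum_le_sum fun u hu => sum_le_sum fun v hv => hterm u hu v hv
    _ ≤ c⁻¹ * (c * (4 * (∑ u ∈ K, t u) * ∑ u ∈ K, t u * y u ^ 2)) :=
        mul_le_mul_of_nonneg_left (sum_sum_ne_mul_mul_add_sq_le ht y)
          (inv_nonneg.2 (Nat.one_sub_one_div_cast_nonneg #K))
    _ ≤ 4 * (∑ u ∈ K, t u) * ∑ u ∈ K, t u * y u ^ 2 := by
        rw [← mul_assoc]
        exact mul_le_of_le_one_left (by positivity) inv_mul_le_one

/-- The matrix of the quadratic form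
`t ↦ ∑_{u ~ v} t u * t v * (y u + y v) ^ 2 / min (a u) (a v) - 4 * (∑ t) * ∑ t * y ^ 2`, to which
the symmetrization is applied. -/
noncomputable def cliqueForm (G : SimpleGraph V) (a y : V → ℝ) : Matrix V V ℝ :=
  Matrix.of fun u v => (if G.Adj u v then (min (a u) (a v))⁻¹ * (y u + y v) ^ 2 else 0)
    - 2 * (y u ^ 2 + y v ^ 2)

variable [Fintype V]

lemma dotProduct_cliqueForm_mulVec (G : SimpleGraph V) (a y t : V → ℝ) :
    t ⬝ᵥ cliqueForm G a y *ᵥ t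
      = ∑ u, ∑ v, (if G.Adj u v then t u * t v * ((min (a u) (a v))⁻¹ * (y u + y v) ^ 2) else 0)
        - 4 * (∑ u, t u) * ∑ u, t u * y u ^ 2 := by
  have hdouble : ∑ u, ∑ v, (t u * y u ^ 2 * (2 * t v) + 2 * t u * (t v * y v ^ 2))
      = 4 * (∑ u, t u) * ∑ u, t u * y u ^ 2 := by
    simp only [sum_add_distrib, ← mul_sum, ← sum_mul]
    ring
  rw [← hdouble, ← sum_sub_distrib]
  simp only [dotProduct, mulVec, cliqueForm, of_apply, mul_sum, ← sum_sub_distrib]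
  exact sum_congr rfl fun u _ => sum_congr rfl fun v _ => by split_ifs <;> ring

lemma dotProduct_cliqueForm_mulVec_nonpos_of_isClique (ha : IsCliqueMajorant G a) (y : V → ℝ)
    {t : V → ℝ} (ht : 0 ≤ t) (hsupp : G.IsClique (Function.support t)) :
    t ⬝ᵥ cliqueForm G a y *ᵥ t ≤ 0 := by
  set K : Finset V := univ.filter (t · ≠ 0) with hK
  have hclique : G.IsClique (K : Set V) := by simpa [hK, Function.support] using hsupp
  have hsum (f : V → ℝ) (hf : ∀ u, t u = 0 → f u = 0) : ∑ u ∈ K, f u = ∑ u, f u :=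
    sum_filter_of_ne fun u _ => mt (hf u)
  rw [dotProduct_cliqueForm_mulVec, sub_nonpos]
  calc ∑ u, ∑ v, (if G.Adj u v then t u * t v * ((min (a u) (a v))⁻¹ * (y u + y v) ^ 2) else 0)
      = ∑ u ∈ K, ∑ v ∈ K,
          (if G.Adj u v then t u * t v * ((min (a u) (a v))⁻¹ * (y u + y v) ^ 2) else 0) := by
        rw [← hsum _ fun u h => by simp [h]]
        exact sum_congr rfl fun u _ => (hsum _ fun v h => by simp [h]).symm
    _ ≤ 4 * (∑ u ∈ K, t u) * ∑ u ∈ K, t u * y u ^ 2 :=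
        sum_adj_mul_mul_le_of_isClique ha hclique (fun u _ => ht u) y
    _ = 4 * (∑ u, t u) * ∑ u, t u * y u ^ 2 := by
        rw [hsum t fun _ => id, hsum (fun u => t u * y u ^ 2) fun u h => by simp [h]]

theorem sum_adj_mul_mul_le (ha : IsCliqueMajorant G a) (y : V → ℝ) {t : V → ℝ} (ht : 0 ≤ t) :
    ∑ u, ∑ v, (if G.Adj u v then t u * t v * ((min (a u) (a v))⁻¹ * (y u + y v) ^ 2) else 0)
      ≤ 4 * (∑ u, t u) * ∑ u, t u * y u ^ 2 := by
  rw [← sub_nonpos, ← dotProduct_cliqueForm_mulVec]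
  refine dotProduct_mulVec_nonpos_of_forall_isClique (G := G) (fun u v _ huv => ?_)
    (fun s => dotProduct_cliqueForm_mulVec_nonpos_of_isClique ha y) ht
  simp only [cliqueForm, of_apply, huv, G.adj_comm v u, SimpleGraph.irrefl, if_false]
  exact le_of_eq (by ring)

theorem sum_adj_add_sq_le (ha : IsCliqueMajorant G a) (x : V → ℝ) :
    ∑ u, ∑ v, (if G.Adj u v then (x u + x v) ^ 2 else 0)
      ≤ 4 * (∑ v, a v) * ∑ v, x v ^ 2 := by
  set y : V → ℝ := fun v => |x v| / √(a v)
  have hterm (u v : V) : (if G.Adj u v then (x u + x v) ^ 2 else 0)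
      ≤ if G.Adj u v then a u * a v * ((min (a u) (a v))⁻¹ * (y u + y v) ^ 2) else 0 := by
    split_ifs with huv
    · calc (x u + x v) ^ 2 ≤ (|x u| + |x v|) ^ 2 :=
            sq_le_sq.2 ((abs_add_le _ _).trans (le_abs_self _))
        _ ≤ _ := add_sq_le_mul_inv_min_mul (ha.pos_of_adj huv) (ha.pos_of_adj huv.symm)
            (abs_nonneg _) (abs_nonneg _)
    · exact le_rfl
  have hweight (v : V) : a v * y v ^ 2 ≤ x v ^ 2 := by
    rw [div_pow, sq_abs, Real.sq_sqrt (ha.nonneg v)]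
    rcases eq_or_ne (a v) 0 with h | h
    · rw [h, zero_mul]
      exact sq_nonneg _
    · rw [mul_div_cancel₀ _ h]
  calc ∑ u, ∑ v, (if G.Adj u v then (x u + x v) ^ 2 else 0)
      ≤ ∑ u, ∑ v,
          (if G.Adj u v then a u * a v * ((min (a u) (a v))⁻¹ * (y u + y v) ^ 2) else 0) :=
        sum_le_sum fun u _ => sum_le_sum fun v _ => hterm u v
    _ ≤ 4 * (∑ v, a v) * ∑ v, a v * y v ^ 2 := sum_adj_mul_mul_le ha y ha.nonneg
    _ ≤ 4 * (∑ v, a v) * ∑ v, x v ^ 2 :=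
        mul_le_mul_of_nonneg_left (sum_le_sum fun v _ => hweight v)
          (mul_nonneg zero_le_four (sum_nonneg fun v _ => ha.nonneg v))

end CliqueForm

section Spectrum

open Matrix

lemma adjMx_eq_adjMatrix [Fintype V] (G : SimpleGraph V) : adjMx G = G.adjMatrix ℝ := rfl

variable [Fintype V] [DecidableEq V]

lemma degMx_eq_degMatrix (G : SimpleGraph V) : degMx G = G.degMatrix ℝ := by
  ext u v
  simp only [degMx, SimpleGraph.degMatrix, G.degree_eq_sum_if_adj]

lemma two_mul_dotProduct_signlessLap_mulVec (G : SimpleGraph V) (x : V → ℝ) :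
    2 * (x ⬝ᵥ signlessLap G *ᵥ x) = ∑ u, ∑ v, if G.Adj u v then (x u + x v) ^ 2 else 0 := by
  have hform : x ⬝ᵥ signlessLap G *ᵥ x
      = ∑ u, ∑ v, if G.Adj u v then x u ^ 2 + x u * x v else 0 := by
    rw [signlessLap, degMx_eq_degMatrix, adjMx_eq_adjMatrix, add_mulVec, dotProduct_add,
      SimpleGraph.dotProduct_mulVec_degMatrix, SimpleGraph.dotProduct_mulVec_adjMatrix,
      ← sum_add_distrib]
    refine sum_congr rfl fun u _ => ?_
    rw [G.degree_eq_sum_if_adj, sum_mul, sum_mul, ← sum_add_distrib]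
    exact sum_congr rfl fun v _ => by split_ifs <;> ring
  have hswap : ∑ u, ∑ v, (if G.Adj u v then x u ^ 2 + x u * x v else 0)
      = ∑ u, ∑ v, if G.Adj u v then x v ^ 2 + x u * x v else 0 := by
    rw [sum_comm]
    exact sum_congr rfl fun u _ => sum_congr rfl fun v _ => by
      rw [G.adj_comm, mul_comm (x u)]
  rw [two_mul, hform]
  nth_rw 2 [hswap]
  simp only [← sum_add_distrib]
  exact sum_congr rfl fun u _ => sum_congr rfl fun v _ => by split_ifs <;> ring

lemma dotProduct_smul_degMx_add_smul_adjMx_mulVec_le (G : SimpleGraph V) {α : ℝ}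
    (hα : α ≤ 1 / 2) (x : V → ℝ) :
    x ⬝ᵥ (α • degMx G + (1 - α) • adjMx G) *ᵥ x ≤ 1 / 2 * (x ⬝ᵥ signlessLap G *ᵥ x) := by
  have hsplit : α • degMx G + (1 - α) • adjMx G
      = (1 / 2 : ℝ) • signlessLap G - (1 / 2 - α) • G.lapMatrix ℝ := by
    rw [signlessLap, SimpleGraph.lapMatrix, ← degMx_eq_degMatrix, ← adjMx_eq_adjMatrix]
    module
  have hlap : 0 ≤ x ⬝ᵥ G.lapMatrix ℝ *ᵥ x :=
    (SimpleGraph.posSemidef_lapMatrix ℝ G).dotProduct_mulVec_nonneg x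
  rw [hsplit, sub_mulVec, smul_mulVec, smul_mulVec, dotProduct_sub, dotProduct_smul,
    dotProduct_smul, smul_eq_mul, smul_eq_mul]
  exact sub_le_self _ (mul_nonneg (sub_nonneg.2 hα) hlap)

lemma maxEig_le_of_forall_dotProduct_mulVec_le [Nonempty V] {A : Matrix V V ℝ}
    (hA : A.IsHermitian) {c : ℝ} (h : ∀ x : V → ℝ, x ⬝ᵥ A *ᵥ x ≤ c * ∑ v, x v ^ 2) :
    maxEig hA ≤ c := by
  refine ciSup_le fun i => ?_
  have hunit : ∑ v, hA.eigenvectorBasis i v ^ 2 = 1 := by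
    simpa [hA.eigenvectorBasis.orthonormal.1 i] using
      (EuclideanSpace.real_norm_sq_eq (hA.eigenvectorBasis i)).symm
  rw [hA.eigenvalues_eq i]
  simpa [hunit] using h (hA.eigenvectorBasis i)

end Spectrum

theorem stmt4_general [Fintype V] [DecidableEq V] [Nonempty V] (G : SimpleGraph V) (α : ℝ)
    (hα : α ≤ 1 / 2) (hA : (α • degMx G + (1 - α) • adjMx G).IsHermitian) :
    maxEig hA ≤ ∑ v, (1 - 1 / (cliqueAt G v : ℝ)) := by
  refine maxEig_le_of_forall_dotProduct_mulVec_le hA fun x => ?_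
  have hle := dotProduct_smul_degMx_add_smul_adjMx_mulVec_le G hα x
  have hform := two_mul_dotProduct_signlessLap_mulVec G x
  have hbound := sum_adj_add_sq_le (isCliqueMajorant_one_sub_one_div_cliqueAt G) x
  linarith

/-- Localized bound for the `A_α`-matrix, `0 ≤ α ≤ 1/2`:
`λ₁(A_α(G)) ≤ ∑_v (1 - 1/c(v))`. -/
theorem stmt4 {V : Type*} [Fintype V] [DecidableEq V]
    (G : SimpleGraph V) (hconn : G.Connected) (α : ℝ) (hα0 : 0 ≤ α) (hα1 : α ≤ 1 / 2)
    (hA : (α • degMx G + (1 - α) • adjMx G).IsHermitian) :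
    maxEig hA ≤ ∑ v, (1 - 1 / (cliqueAt G v : ℝ)) := by
  have := hconn.nonempty
  exact stmt4_general G α hα1 hA
end

section
/- For every finite simple connected graph G, the largest adjacency eigenvalue λ₁(G) satisfies λ₁(G)² ≤ ∑_{e ∈ E(G)} 2(1 − 1/c(e)), where for an edge e = uv, c(e) is the order of the largest clique of G containing both endpoints of e. -/
open scoped Classical
open Finset

variable {V : Type*}

/-!
For positive edge weights `w`, Cauchy–Schwarz gives
`(∑ x_u x_v)² ≤ (∑ w_uv) (∑ x_u² x_v² / w_uv)`, the sums running over ordered adjacent pairs.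
For `w_uv = 1 - 1/c(uv)` and `x` a unit eigenvector of `λ₁`, it remains to see that the last factor
is at most `1`. This is a Motzkin–Straus inequality for the quadratic form `M` with entries
`1 / w_uv`, evaluated at the nonnegative vector `y = (x_u²)`. If `u` and `v` are nonadjacent
vertices of the support of `y`, then `M` vanishes along the direction `e_u - e_v`, so one of the two
ways of moving all mass from one vertex to the other does not decrease the form. One may therefore
assume that the support of `y` is a clique, of size `k` say. All its edges have `c(uv) ≥ k`, and
Cauchy–Schwarz bounds the sum of `y_u y_v` over distinct `u` and `v` by `(1 - 1/k) (∑ y_u)²`.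
-/

open Matrix

section TransferMass

variable [DecidableEq V] {R : Type*} [CommRing R] {y : V → R} {u v : V}

/-- The vector obtained from `y` by moving all the mass at `v` to `u`: the symmetrization step of
the Motzkin–Straus argument. -/
def transferMass (y : V → R) (u v : V) : V → R :=
  y + y v • (Pi.single u 1 - Pi.single v 1)

lemma transferMass_apply_left (huv : u ≠ v) : transferMass y u v u = y u + y v := by
  simp [transferMass, huv]

lemma transferMass_apply_right (huv : u ≠ v) : transferMass y u v v = 0 := by
  simp [transferMass, huv.symm]

lemma transferMass_apply_of_ne {a : V} (hau : a ≠ u) (hav : a ≠ v) :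
    transferMass y u v a = y a := by
  simp [transferMass, hau, hav]

lemma support_transferMass_ssubset (hu : y u ≠ 0) (hv : y v ≠ 0) (huv : u ≠ v) :
    (transferMass y u v).support ⊂ y.support := by
  refine (Set.ssubset_iff_of_subset fun a ha => ?_).2
    ⟨v, hv, Function.notMem_support.2 (transferMass_apply_right huv)⟩
  obtain rfl | hau := eq_or_ne a u
  · exact hu
  obtain rfl | hav := eq_or_ne a v
  · exact hv
  · simpa only [Function.mem_support, transferMass_apply_of_ne hau hav] using ha

section Fintype

variable [Fintype V]

lemma sum_transferMass : ∑ a, transferMass y u v a = ∑ a, y a := by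
  simp [transferMass, sum_add_distrib, ← mul_sum]

lemma transferMass_dotProduct_mulVec_transferMass (M : Matrix V V R) :
    transferMass y u v ⬝ᵥ M *ᵥ transferMass y u v =
      y ⬝ᵥ M *ᵥ y + y v * ((M *ᵥ y + y ᵥ* M) u - (M *ᵥ y + y ᵥ* M) v) +
        y v ^ 2 * (M u u + M v v - (M u v + M v u)) := by
  have mulVec_apply (a : V) : (M *ᵥ y) a = M a ⬝ᵥ y := rfl
  simp only [transferMass, dotProduct_mulVec, add_vecMul, sub_vecMul, smul_vecMul,
    add_dotProduct, dotProduct_add, sub_dotProduct, dotProduct_sub, smul_dotProduct,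
    dotProduct_smul, dotProduct_single_one, single_one_vecMul, Pi.add_apply, Pi.smul_apply,
    Pi.sub_apply, smul_eq_mul, row, mulVec_apply]
  ring

end Fintype

variable [LinearOrder R] [IsOrderedRing R]

lemma transferMass_nonneg (hy : ∀ a, 0 ≤ y a) (huv : u ≠ v) (a : V) :
    0 ≤ transferMass y u v a := by
  obtain rfl | hau := eq_or_ne a u
  · simpa only [transferMass_apply_left huv] using add_nonneg (hy a) (hy v)
  obtain rfl | hav := eq_or_ne a v
  · exact (transferMass_apply_right huv).ge
  · simpa only [transferMass_apply_of_ne hau hav] using hy a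

lemma dotProduct_mulVec_le_transferMass [Fintype V] {M : Matrix V V R} (hv : 0 ≤ y v)
    (hconvex : M u v + M v u ≤ M u u + M v v)
    (hgrad : (M *ᵥ y + y ᵥ* M) v ≤ (M *ᵥ y + y ᵥ* M) u) :
    y ⬝ᵥ M *ᵥ y ≤ transferMass y u v ⬝ᵥ M *ᵥ transferMass y u v := by
  rw [transferMass_dotProduct_mulVec_transferMass, add_assoc]
  exact le_add_of_nonneg_right <| add_nonneg (mul_nonneg hv (sub_nonneg.2 hgrad))
    (mul_nonneg (sq_nonneg (y v)) (sub_nonneg.2 hconvex))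

end TransferMass

section MotzkinStraus

variable [Fintype V] {𝕜 : Type*} [Field 𝕜] [LinearOrder 𝕜] [IsStrictOrderedRing 𝕜]

lemma sum_sum_ne_mul_le_of_support_subset {s : Finset V} {y : V → 𝕜} (hs : ∀ a ∉ s, y a = 0) :
    ∑ a, ∑ b, (if a = b then 0 else y a * y b) ≤ (1 - 1 / (#s : 𝕜)) * (∑ a, y a) ^ 2 := by
  have sum_eq : ∑ a, y a = ∑ a ∈ s, y a :=
    (sum_subset (subset_univ s) fun a _ ha => hs a ha).symm
  have sum_sq_ge : (∑ a, y a) ^ 2 / #s ≤ ∑ a, y a ^ 2 :=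
    div_le_of_le_mul₀ (Nat.cast_nonneg _) (sum_nonneg fun a _ => sq_nonneg (y a)) <| calc
      (∑ a, y a) ^ 2 ≤ #s * ∑ a ∈ s, y a ^ 2 := sum_eq ▸ sq_sum_le_card_mul_sum_sq
      _ ≤ #s * ∑ a, y a ^ 2 := by
        gcongr
        exact subset_univ s
      _ = (∑ a, y a ^ 2) * #s := mul_comm _ _
  calc
    ∑ a, ∑ b, (if a = b then 0 else y a * y b)
        = ∑ a, ∑ b, (y a * y b - if a = b then y a * y b else 0) :=
          sum_congr rfl fun a _ => sum_congr rfl fun b _ => by split_ifs <;> ring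
    _ = (∑ a, y a) ^ 2 - ∑ a, y a ^ 2 := by
          simp [sum_sub_distrib, sq, sum_mul_sum]
    _ ≤ (∑ a, y a) ^ 2 - (∑ a, y a) ^ 2 / #s := by gcongr
    _ = (1 - 1 / (#s : 𝕜)) * (∑ a, y a) ^ 2 := by ring

lemma dotProduct_mulVec_le_sq_sum_of_support_subset {M : Matrix V V 𝕜} {s : Finset V} {y : V → 𝕜}
    (hdiag : ∀ a, M a a ≤ 0)
    (hM : ∀ a ∈ s, ∀ b ∈ s, a ≠ b → M a b ≤ (1 - 1 / (#s : 𝕜))⁻¹)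
    (hy : ∀ a, 0 ≤ y a) (hs : ∀ a ∉ s, y a = 0) :
    y ⬝ᵥ M *ᵥ y ≤ (∑ a, y a) ^ 2 := by
  have entry_le (a b : V) :
      y a * (M a b * y b) ≤ (1 - 1 / (#s : 𝕜))⁻¹ * (if a = b then 0 else y a * y b) := by
    have hyab : 0 ≤ y a * y b := mul_nonneg (hy a) (hy b)
    rw [mul_left_comm]
    split_ifs with hab
    · subst hab
      simpa only [mul_zero] using mul_nonpos_of_nonpos_of_nonneg (hdiag a) hyab
    by_cases ha : a ∈ s
    · by_cases hb : b ∈ s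
      · exact mul_le_mul_of_nonneg_right (hM a ha b hb hab) hyab
      · simp [hs b hb]
    · simp [hs a ha]
  have coeff_nonneg : 0 ≤ (1 - 1 / (#s : 𝕜))⁻¹ :=
    inv_nonneg.2 <| sub_nonneg.2 <| by simpa only [one_div] using Nat.cast_inv_le_one #s
  calc
    y ⬝ᵥ M *ᵥ y = ∑ a, ∑ b, y a * (M a b * y b) := by simp only [dotProduct, mulVec, mul_sum]
    _ ≤ ∑ a, ∑ b, (1 - 1 / (#s : 𝕜))⁻¹ * (if a = b then 0 else y a * y b) :=
      sum_le_sum fun a _ => sum_le_sum fun b _ => entry_le a b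
    _ = (1 - 1 / (#s : 𝕜))⁻¹ * ∑ a, ∑ b, (if a = b then 0 else y a * y b) := by
      simp only [mul_sum]
    _ ≤ (1 - 1 / (#s : 𝕜))⁻¹ * ((1 - 1 / (#s : 𝕜)) * (∑ a, y a) ^ 2) := by
      gcongr
      exact sum_sum_ne_mul_le_of_support_subset hs
    -- For `#s = 1` the factor `1 - 1 / #s` is `0`, with inverse `0`, so equality can fail here.
    _ ≤ (∑ a, y a) ^ 2 := by
      rw [← mul_assoc]
      exact mul_le_of_le_one_left (sq_nonneg _) inv_mul_le_one

theorem dotProduct_mulVec_le_sq_sum_of_forall_isClique {G : SimpleGraph V} {M : Matrix V V 𝕜}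
    (hsupp : ∀ a b, ¬ G.Adj a b → M a b = 0)
    (hclique : ∀ s : Finset V, G.IsClique (s : Set V) →
      ∀ a ∈ s, ∀ b ∈ s, a ≠ b → M a b ≤ (1 - 1 / (#s : 𝕜))⁻¹)
    {y : V → 𝕜} (hy : ∀ a, 0 ≤ y a) :
    y ⬝ᵥ M *ᵥ y ≤ (∑ a, y a) ^ 2 := by
  induction hs : y.support using WellFoundedLT.induction generalizing y with
  | ind s ih =>
  subst hs
  have hdiag (a : V) : M a a = 0 := hsupp a a G.irrefl
  by_cases hc : G.IsClique y.support
  · exact dotProduct_mulVec_le_sq_sum_of_support_subset (fun a => (hdiag a).le)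
      (hclique y.support.toFinset (by simpa using hc)) hy fun a ha => by simpa using ha
  obtain ⟨u, hu, v, hv, huv, hadj⟩ : ∃ u, y u ≠ 0 ∧ ∃ v, y v ≠ 0 ∧ u ≠ v ∧ ¬ G.Adj u v := by
    simpa [SimpleGraph.isClique_iff, Set.Pairwise] using hc
  wlog hgrad : (M *ᵥ y + y ᵥ* M) v ≤ (M *ᵥ y + y ᵥ* M) u generalizing u v
  · exact this v hv u hu huv.symm (mt SimpleGraph.Adj.symm hadj) (le_of_not_ge hgrad)
  have hconvex : M u v + M v u ≤ M u u + M v v := by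
    rw [hsupp u v hadj, hsupp v u (mt SimpleGraph.Adj.symm hadj), hdiag, hdiag]
  calc
    y ⬝ᵥ M *ᵥ y ≤ transferMass y u v ⬝ᵥ M *ᵥ transferMass y u v :=
      dotProduct_mulVec_le_transferMass (hy v) hconvex hgrad
    _ ≤ (∑ a, transferMass y u v a) ^ 2 :=
      ih _ (support_transferMass_ssubset hu hv huv) (transferMass_nonneg hy huv) rfl
    _ = (∑ a, y a) ^ 2 := by rw [sum_transferMass]

lemma sq_dotProduct_mulVec_le {A : Matrix V V 𝕜} {w : V → V → 𝕜}
    (hw : ∀ u v, 0 ≤ w u v) (hA : ∀ u v, w u v = 0 → A u v = 0) (x : V → 𝕜) :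
    (x ⬝ᵥ A *ᵥ x) ^ 2 ≤
      (∑ u, ∑ v, w u v) * (x ^ 2 ⬝ᵥ (of fun u v => A u v ^ 2 / w u v) *ᵥ x ^ 2) := by
  have quad_eq_sum (B : Matrix V V 𝕜) (z : V → 𝕜) :
      z ⬝ᵥ B *ᵥ z = ∑ p : V × V, z p.1 * (B p.1 p.2 * z p.2) := by
    simp only [dotProduct, mulVec, mul_sum, Fintype.sum_prod_type]
  rw [quad_eq_sum, quad_eq_sum, ← Fintype.sum_prod_type']
  simp only [of_apply, Pi.pow_apply]
  refine sum_sq_le_sum_mul_sum_of_sq_le_mul univ (fun p _ => hw p.1 p.2)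
    (fun p _ => ?_) (fun p _ => ?_)
  · have := hw p.1 p.2
    positivity
  · have cancel : w p.1 p.2 * (A p.1 p.2 ^ 2 / w p.1 p.2) = A p.1 p.2 ^ 2 :=
      mul_div_cancel_of_imp' fun h => by rw [hA _ _ h, zero_pow two_ne_zero]
    linear_combination -(x p.1 ^ 2 * x p.2 ^ 2) * cancel

end MotzkinStraus

section EdgeWeight

lemma card_le_cliqueAtEdge [Finite V] {G : SimpleGraph V} {s : Finset V}
    (hs : G.IsClique (s : Set V)) {a b : V} (ha : a ∈ s) (hb : b ∈ s) :
    #s ≤ cliqueAtEdge G a b := by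
  have bdd : BddAbove {n | ∃ t : Finset V, G.IsNClique n t ∧ a ∈ t ∧ b ∈ t} := by
    refine (Set.finite_range (card : Finset V → ℕ)).bddAbove.mono ?_
    rintro _ ⟨t, ht, _⟩
    exact ⟨t, ht.card_eq⟩
  exact le_csSup bdd ⟨s, ⟨hs, rfl⟩, ha, hb⟩

/-- The weight `1 - 1/c(uv)` of an edge `uv` in the localized Turán sum, extended by `0` to
nonadjacent pairs. -/
noncomputable def turanWeight (G : SimpleGraph V) (u v : V) : ℝ :=
  if G.Adj u v then 1 - 1 / (cliqueAtEdge G u v : ℝ) else 0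

variable {G : SimpleGraph V}

lemma turanWeight_of_not_adj {a b : V} (h : ¬ G.Adj a b) : turanWeight G a b = 0 := if_neg h

variable [Finite V]

lemma one_sub_one_div_card_le_turanWeight {s : Finset V} (hs : G.IsClique (s : Set V)) {a b : V}
    (ha : a ∈ s) (hb : b ∈ s) (hab : a ≠ b) : 1 - 1 / (#s : ℝ) ≤ turanWeight G a b := by
  have hcard : (0 : ℝ) < #s := by exact_mod_cast card_pos.2 ⟨a, ha⟩
  rw [turanWeight, if_pos (hs ha hb hab)]
  gcongr
  exact card_le_cliqueAtEdge hs ha hb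

lemma one_half_le_turanWeight {a b : V} (h : G.Adj a b) : 1 / 2 ≤ turanWeight G a b := by
  have pair_clique : G.IsClique (({a, b} : Finset V) : Set V) := by
    simpa [SimpleGraph.isClique_pair] using fun _ => h
  calc
    (1 / 2 : ℝ) = 1 - 1 / (#{a, b} : ℝ) := by rw [card_pair h.ne]; norm_num
    _ ≤ turanWeight G a b :=
      one_sub_one_div_card_le_turanWeight pair_clique (by simp) (by simp) h.ne

lemma turanWeight_nonneg (a b : V) : 0 ≤ turanWeight G a b := by
  by_cases h : G.Adj a b
  · linarith [one_half_le_turanWeight h]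
  · exact (turanWeight_of_not_adj h).ge

lemma not_adj_of_turanWeight_eq_zero {a b : V} (h : turanWeight G a b = 0) : ¬ G.Adj a b := by
  intro hab
  linarith [one_half_le_turanWeight hab]

end EdgeWeight

section Spectral

variable [Fintype V] {G : SimpleGraph V}

lemma dotProduct_sq_adjMx_div_turanWeight_mulVec_le {y : V → ℝ} (hy : ∀ a, 0 ≤ y a) :
    y ⬝ᵥ (of fun u v => adjMx G u v ^ 2 / turanWeight G u v) *ᵥ y ≤ (∑ a, y a) ^ 2 := by
  refine dotProduct_mulVec_le_sq_sum_of_forall_isClique (G := G) (fun a b h => ?_)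
    (fun s hs a ha b hb hab => ?_) hy
  · simp [turanWeight_of_not_adj h]
  · have two_le_card : (2 : ℝ) ≤ #s := by exact_mod_cast one_lt_card.2 ⟨a, ha, b, hb, hab⟩
    have card_weight_pos : (0 : ℝ) < 1 - 1 / (#s : ℝ) :=
      sub_pos.2 <| (div_lt_one (by linarith)).2 (by linarith)
    simpa [adjMx, hs ha hb hab] using
      inv_anti₀ card_weight_pos (one_sub_one_div_card_le_turanWeight hs ha hb hab)

lemma sq_dotProduct_adjMx_mulVec_le (x : V → ℝ) :
    (x ⬝ᵥ adjMx G *ᵥ x) ^ 2 ≤ (∑ u, ∑ v, turanWeight G u v) * (x ⬝ᵥ x) ^ 2 := by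
  have weight_sum_nonneg : 0 ≤ ∑ u, ∑ v, turanWeight G u v :=
    sum_nonneg fun u _ => sum_nonneg fun v _ => turanWeight_nonneg u v
  have sum_sq : ∑ a, (x ^ 2) a = x ⬝ᵥ x := by simp only [dotProduct, Pi.pow_apply, sq]
  calc
    (x ⬝ᵥ adjMx G *ᵥ x) ^ 2
      ≤ (∑ u, ∑ v, turanWeight G u v) *
          (x ^ 2 ⬝ᵥ (of fun u v => adjMx G u v ^ 2 / turanWeight G u v) *ᵥ x ^ 2) :=
        sq_dotProduct_mulVec_le turanWeight_nonneg
          (fun u v h => by simp [adjMx, not_adj_of_turanWeight_eq_zero h]) x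
    _ ≤ (∑ u, ∑ v, turanWeight G u v) * (x ⬝ᵥ x) ^ 2 := by
        rw [← sum_sq]
        gcongr
        exact dotProduct_sq_adjMx_div_turanWeight_mulVec_le fun a => sq_nonneg (x a)

variable [DecidableEq V]

theorem sq_eigenvalue_adjMx_le {μ : ℝ} (hμ : Module.End.HasEigenvalue (toLin' (adjMx G)) μ) :
    μ ^ 2 ≤ ∑ u, ∑ v, turanWeight G u v := by
  obtain ⟨x, hx⟩ := hμ.exists_hasEigenvector
  have norm_pos : 0 < x ⬝ᵥ x :=
    (dotProduct_self_star_nonneg x).lt_of_ne' (mt dotProduct_self_eq_zero.1 hx.2)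
  have quad : x ⬝ᵥ adjMx G *ᵥ x = μ * (x ⬝ᵥ x) := by
    rw [← toLin'_apply, hx.apply_eq_smul, dotProduct_smul, smul_eq_mul]
  have bound := sq_dotProduct_adjMx_mulVec_le (G := G) x
  rw [quad, mul_pow] at bound
  exact le_of_mul_le_mul_right bound (pow_pos norm_pos 2)

lemma hasEigenvalue_maxEig [Nonempty V] {A : Matrix V V ℝ} (hA : A.IsHermitian) :
    Module.End.HasEigenvalue (toLin' A) (maxEig hA) := by
  obtain ⟨i, hi⟩ := exists_eq_ciSup_of_finite (f := hA.eigenvalues)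
  rw [maxEig, ← hi, Module.End.hasEigenvalue_iff_mem_spectrum, spectrum_toLin']
  exact hA.eigenvalues_mem_spectrum_real i

end Spectral

theorem stmt5_general {V : Type*} [Fintype V] [DecidableEq V] [Nonempty V] (G : SimpleGraph V) :
    (lambda1 G) ^ 2 ≤
      ∑ u, ∑ v, (if G.Adj u v then (1 - 1 / (cliqueAtEdge G u v : ℝ)) else 0) :=
  sq_eigenvalue_adjMx_le (hasEigenvalue_maxEig (adjMx_isHermitian G))

/-- Edge-localized spectral Turán theorem: `λ₁(G)² ≤ ∑_{uv ∈ E(G)} 2 (1 - 1/c(uv))`.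
(The double sum over ordered adjacent pairs counts each edge twice,
which accounts for the factor `2`.) -/
theorem stmt5 {V : Type*} [Fintype V] [DecidableEq V]
    (G : SimpleGraph V) (hconn : G.Connected) :
    (lambda1 G) ^ 2 ≤
      ∑ u, ∑ v, (if G.Adj u v then (1 - 1 / (cliqueAtEdge G u v : ℝ)) else 0) :=
  have := hconn.nonempty
  stmt5_general G
end

section
/- (Motzkin–Strauss) Let G be a finite simple graph on a nonempty vertex set V with clique number ω(G), and let x : V → ℝ satisfy x_v ≥ 0 for all v and ∑_{v ∈ V} x_v = 1. Then xᵀ A(G) x ≤ 1 − 1/ω(G), i.e., 2·∑_{uv ∈ E(G)} x_u x_v ≤ 1 − 1/ω(G). -/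
open scoped Classical
open Finset Matrix

variable {V : Type*}

/-!
If `u` and `v` are non-adjacent, then `xᵀ A(G) x` is affine along `e_u - e_v`, so moving the whole
weight of one of them onto the other, in the right direction, does not decrease it. Repeating this
concentrates the weight on a clique `t`, where the form is `(∑ x)² - ∑ x²`, and Cauchy–Schwarz gives
`∑ x² ≥ 1 / #t`.
-/

section WeightedGraph

variable {R : Type*} {G : SimpleGraph V} {s : Finset V} {x y : V → R} {u v : V}

/-- The weighted degree of the vertex `u` into the finite set `s`: the total weight of the
neighbours of `u` in `s`. For `u ∈ s` it is half the partial derivative of `adjForm G s` in the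
direction `u`. -/
noncomputable def weightedDegree [AddCommMonoid R] (G : SimpleGraph V) (s : Finset V)
    (x : V → R) (u : V) : R :=
  ∑ v ∈ s with G.Adj u v, x v

/-- The quadratic form `xᵀ A x` of the adjacency matrix `A` of the subgraph induced on `s`, which
is twice its Lagrangian `∑_{uv ∈ E} x_u x_v`. Restricting to a finite set `s` of vertices allows
infinite graphs, and lets a vertex be discarded without changing the weights. -/
noncomputable def adjForm [NonUnitalNonAssocSemiring R] (G : SimpleGraph V) (s : Finset V)
    (x : V → R) : R :=
  ∑ u ∈ s, x u * weightedDegree G s x u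

lemma dotProduct_adjMx_mulVec [Fintype V] (G : SimpleGraph V) (x : V → ℝ) :
    x ⬝ᵥ (adjMx G).mulVec x = adjForm G univ x := by
  simp [dotProduct, mulVec, adjMx, adjForm, weightedDegree, sum_filter]

lemma weightedDegree_congr [AddCommMonoid R] (h : ∀ v ∈ s, G.Adj u v → x v = y v) :
    weightedDegree G s x u = weightedDegree G s y u :=
  sum_congr rfl fun v hv => h v (mem_filter.1 hv).1 (mem_filter.1 hv).2

lemma adjForm_congr [NonUnitalNonAssocSemiring R] (h : ∀ v ∈ s, x v = y v) :
    adjForm G s x = adjForm G s y :=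
  sum_congr rfl fun u hu => by rw [h u hu, weightedDegree_congr fun v hv _ => h v hv]

lemma weightedDegree_erase_of_not_adj [AddCommMonoid R] (huv : ¬ G.Adj u v) :
    weightedDegree G (s.erase v) x u = weightedDegree G s x u := by
  rw [weightedDegree, filter_erase, erase_eq_of_notMem (by simp [huv]), weightedDegree]

lemma weightedDegree_eq_erase_add_ite [AddCommMonoid R] (hv : v ∈ s) :
    weightedDegree G s x u =
      weightedDegree G (s.erase v) x u + if G.Adj u v then x v else 0 := by
  simp only [weightedDegree, sum_filter, sum_erase_add _ _ hv]

lemma adjForm_eq_erase_add [CommSemiring R] (hv : v ∈ s) :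
    adjForm G s x = adjForm G (s.erase v) x + 2 * x v * weightedDegree G s x v := by
  have sum_adj : ∑ u ∈ s.erase v, x u * (if G.Adj u v then x v else 0) =
      x v * weightedDegree G (s.erase v) x v := by
    simp only [weightedDegree, sum_filter, mul_sum, mul_ite, mul_zero, G.adj_comm v, mul_comm]
  calc adjForm G s x
      = ∑ u ∈ s.erase v, x u * weightedDegree G s x u + x v * weightedDegree G s x v :=
        (sum_erase_add _ _ hv).symm
    _ = adjForm G (s.erase v) x + x v * weightedDegree G (s.erase v) x v +
          x v * weightedDegree G s x v := by
        simp only [weightedDegree_eq_erase_add_ite hv, mul_add, sum_add_distrib, sum_adj,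
          adjForm]
    _ = adjForm G (s.erase v) x + 2 * x v * weightedDegree G s x v := by
        rw [weightedDegree_erase_of_not_adj (G.irrefl (v := v))]
        ring

lemma adjForm_update_add [CommSemiring R] (hu : u ∈ s) (c : R) :
    adjForm G s (Function.update x u (x u + c)) =
      adjForm G s x + 2 * c * weightedDegree G s x u := by
  have form_erase : adjForm G (s.erase u) (Function.update x u (x u + c)) =
      adjForm G (s.erase u) x :=
    adjForm_congr fun w hw => Function.update_of_ne (ne_of_mem_erase hw) _ _
  have degree_eq : weightedDegree G s (Function.update x u (x u + c)) u =
      weightedDegree G s x u :=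
    weightedDegree_congr fun w _ huw => Function.update_of_ne huw.ne' _ _
  rw [adjForm_eq_erase_add hu, adjForm_eq_erase_add (x := x) hu, form_erase, degree_eq,
    Function.update_self]
  ring

lemma sum_erase_update_add [AddCommMonoid R] (hu : u ∈ s) (hv : v ∈ s) (huv : u ≠ v) :
    ∑ w ∈ s.erase v, Function.update x u (x u + x v) w = ∑ w ∈ s, x w := by
  have hu' : u ∈ s.erase v := mem_erase.2 ⟨huv, hu⟩
  rw [sum_update_of_mem hu', ← erase_eq, ← sum_erase_add s x hv, ← sum_erase_add _ x hu']
  abel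

lemma adjForm_eq_of_isClique [Ring R] (hs : G.IsClique (s : Set V)) :
    adjForm G s x = (∑ v ∈ s, x v) ^ 2 - ∑ v ∈ s, x v ^ 2 := by
  have degree_eq (u) (hu : u ∈ s) : weightedDegree G s x u = ∑ v ∈ s, x v - x u := by
    have neighbors : {v ∈ s | G.Adj u v} = s.erase u := by
      ext v
      simp only [mem_filter, mem_erase]
      exact ⟨fun h => ⟨h.2.ne', h.1⟩, fun h => ⟨h.2, hs hu h.2 h.1.symm⟩⟩
    rw [weightedDegree, neighbors, sum_erase_eq_sub hu]
  calc adjForm G s x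
      = ∑ u ∈ s, x u * (∑ v ∈ s, x v - x u) :=
        sum_congr rfl fun u hu => by rw [degree_eq u hu]
    _ = (∑ v ∈ s, x v) ^ 2 - ∑ v ∈ s, x v ^ 2 := by
        simp only [mul_sub, sum_sub_distrib, ← sum_mul, sq]

lemma adjForm_le_erase_update_add [CommSemiring R] [PartialOrder R] [IsOrderedRing R]
    (hu : u ∈ s) (hv : v ∈ s) (huv : u ≠ v) (hadj : ¬ G.Adj u v) (hxv : 0 ≤ x v)
    (hdeg : weightedDegree G s x v ≤ weightedDegree G s x u) :
    adjForm G s x ≤ adjForm G (s.erase v) (Function.update x u (x u + x v)) := by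
  rw [adjForm_update_add (mem_erase.2 ⟨huv, hu⟩), adjForm_eq_erase_add hv,
    weightedDegree_erase_of_not_adj hadj]
  gcongr
  exact mul_nonneg zero_le_two hxv

lemma exists_not_adj_weightedDegree_le [AddCommMonoid R] [LinearOrder R] (x : V → R)
    (hs : ¬ G.IsClique (s : Set V)) :
    ∃ u ∈ s, ∃ v ∈ s, u ≠ v ∧ ¬ G.Adj u v ∧
      weightedDegree G s x v ≤ weightedDegree G s x u := by
  simp only [SimpleGraph.IsClique, Set.Pairwise] at hs
  push Not at hs
  obtain ⟨u, hu, v, hv, huv, hadj⟩ := hs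
  rcases le_total (weightedDegree G s x v) (weightedDegree G s x u) with hle | hle
  · exact ⟨u, hu, v, hv, huv, hadj, hle⟩
  · exact ⟨v, hv, u, hu, huv.symm, mt G.adj_symm hadj, hle⟩

lemma exists_isClique_adjForm_le [CommSemiring R] [LinearOrder R] [IsOrderedRing R]
    (G : SimpleGraph V) (s : Finset V) (x : V → R) (hx : ∀ v ∈ s, 0 ≤ x v) :
    ∃ t ⊆ s, G.IsClique (t : Set V) ∧
      ∃ y : V → R, (∀ v ∈ t, 0 ≤ y v) ∧ ∑ v ∈ t, y v = ∑ v ∈ s, x v ∧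
        adjForm G s x ≤ adjForm G t y := by
  induction s using Finset.strongInduction generalizing x with
  | H s ih =>
    by_cases hs : G.IsClique (s : Set V)
    · exact ⟨s, Subset.rfl, hs, x, hx, rfl, le_rfl⟩
    obtain ⟨u, hu, v, hv, huv, hadj, hdeg⟩ := exists_not_adj_weightedDegree_le x hs
    have update_nonneg : ∀ w ∈ s.erase v, 0 ≤ Function.update x u (x u + x v) w := by
      intro w hw
      rcases eq_or_ne w u with rfl | hwu
      · simpa only [Function.update_self] using add_nonneg (hx w hu) (hx v hv)
      · simpa only [Function.update_of_ne hwu] using hx w (mem_of_mem_erase hw)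
    obtain ⟨t, hts, ht, y, hy, hsum, hle⟩ := ih _ (erase_ssubset hv) _ update_nonneg
    exact ⟨t, hts.trans (erase_subset v s), ht, y, hy,
      hsum.trans (sum_erase_update_add hu hv huv),
      (adjForm_le_erase_update_add hu hv huv hadj (hx v hv) hdeg).trans hle⟩

end WeightedGraph

lemma cliqueFree_cliqueNum_add_one [Finite V] (G : SimpleGraph V) :
    G.CliqueFree (G.cliqueNum + 1) := fun _ ht =>
  absurd ht.isClique.card_le_cliqueNum (by simp [ht.card_eq])

theorem stmt7_general {K : Type*} [Field K] [LinearOrder K] [IsStrictOrderedRing K]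
    {G : SimpleGraph V} {s : Finset V} {n : ℕ} (hG : G.CliqueFreeOn s (n + 1))
    (x : V → K) (hx : ∀ v ∈ s, 0 ≤ x v) (hsum : ∑ v ∈ s, x v = 1) :
    adjForm G s x ≤ 1 - 1 / n := by
  obtain ⟨t, hts, ht, y, -, sum_y, hle⟩ := exists_isClique_adjForm_le G s x hx
  rw [hsum] at sum_y
  have card_le : #t ≤ n := by
    by_contra! hlt
    exact hG.mono G hlt (coe_subset.2 hts) ⟨ht, rfl⟩
  have cauchy_schwarz : 1 ≤ n * ∑ v ∈ t, y v ^ 2 :=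
    calc (1 : K) = (∑ v ∈ t, y v) ^ 2 := by rw [sum_y, one_pow]
      _ ≤ #t * ∑ v ∈ t, y v ^ 2 := sq_sum_le_card_mul_sum_sq
      _ ≤ n * ∑ v ∈ t, y v ^ 2 := by gcongr
  have n_pos : (0 : K) < n :=
    pos_of_mul_pos_left (one_pos.trans_le cauchy_schwarz) (sum_nonneg fun v _ => sq_nonneg (y v))
  calc adjForm G s x ≤ adjForm G t y := hle
    _ = 1 - ∑ v ∈ t, y v ^ 2 := by rw [adjForm_eq_of_isClique ht, sum_y, one_pow]
    _ ≤ 1 - 1 / n := sub_le_sub_left ((div_le_iff₀' n_pos).2 cauchy_schwarz) 1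

/-- **Motzkin–Strauss.** For any `x ≥ 0` with `∑ x_v = 1`,
`xᵀ A(G) x ≤ 1 - 1/ω(G)`. -/
theorem stmt7 {V : Type*} [Fintype V] [DecidableEq V] [Nonempty V]
    (G : SimpleGraph V) (x : V → ℝ) (hx : ∀ v, 0 ≤ x v) (hsum : ∑ v, x v = 1) :
    x ⬝ᵥ (adjMx G).mulVec x ≤ 1 - 1 / (G.cliqueNum : ℝ) := by
  rw [dotProduct_adjMx_mulVec]
  exact stmt7_general (cliqueFree_cliqueNum_add_one G).cliqueFreeOn x (fun v _ => hx v) hsum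
end
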